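/- Fix a measurable allocation p : T → ℝ^m satisfying fraction feasibility (FF) and such that each p̃_j is monotone increasing. Define the payment rule x*_j(t) = θ t_j ∑_{i∈S_j} p_i(t) − θ ∫_{a_j}^{t_j} ∑_{i∈S_j} p_i(τ, t_{−j}) dτ for each j and t ∈ T. Then x* satisfies conditions (ii) and (iii) of Lemma 1 with ṽ_j(a_j) = 0 for every j (in particular, the envelope condition ṽ_j(t) = ṽ_j(a_j) + θ ∫_{a_j}^{t} p̃_j(τ) dτ holds for all t and j), and x* maximizes the objective −∑_{j=1}^n ṽ_j(a_j) over all integrable payment rules x satisfying conditions (ii) and (iii) of Lemma 1, achieving the optimal value 0. (Proposition 1.) -/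

import Mathlib

open MeasureTheory Finset

noncomputable section Caching

/-- The joint type space T = ∏_j [a_j, ā_j]. -/
def Tspace {n : ℕ} (a abar : Fin n → ℝ) : Set (Fin n → ℝ) :=
  Set.univ.pi fun j => Set.Icc (a j) (abar j)

/-- The joint density f(t) = ∏_j f_j(t_j). -/
def jointDens {n : ℕ} (f : Fin n → ℝ → ℝ) (t : Fin n → ℝ) : ℝ :=
  ∏ j, f j (t j)

/-- Interim allocation p̃_j(τ) = ∫_{T_{−j}} (∑_{i∈S_j} p_i(τ, t_{−j})) f_{−j}(t_{−j}) dt_{−j},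
written as an integral over the whole type space against the joint density
(the coordinate j integrates out since f_j is a probability density). -/
def interimAlloc {n m : ℕ} (a abar : Fin n → ℝ) (f : Fin n → ℝ → ℝ)
    (S : Fin n → Finset (Fin m)) (p : (Fin n → ℝ) → Fin m → ℝ)
    (j : Fin n) (τ : ℝ) : ℝ :=
  ∫ t in Tspace a abar, (∑ i ∈ S j, p (Function.update t j τ) i) * jointDens f t

/-- Interim payment x̃_j(τ) = ∫_{T_{−j}} x_j(τ, t_{−j}) f_{−j}(t_{−j}) dt_{−j}. -/
def interimPay {n : ℕ} (a abar : Fin n → ℝ) (f : Fin n → ℝ → ℝ)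
    (x : (Fin n → ℝ) → Fin n → ℝ) (j : Fin n) (τ : ℝ) : ℝ :=
  ∫ t in Tspace a abar, x (Function.update t j τ) j * jointDens f t

/-- Truthful interim utility ṽ_j(t) = θ t p̃_j(t) − x̃_j(t). -/
def vtld {n m : ℕ} (θ : ℝ) (a abar : Fin n → ℝ) (f : Fin n → ℝ → ℝ)
    (S : Fin n → Finset (Fin m)) (p : (Fin n → ℝ) → Fin m → ℝ)
    (x : (Fin n → ℝ) → Fin n → ℝ) (j : Fin n) (t : ℝ) : ℝ :=
  θ * t * interimAlloc a abar f S p j t - interimPay a abar f x j t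

/-- The payment rule x*_j(t) = θ t_j ∑_{i∈S_j} p_i(t)
− θ ∫_{a_j}^{t_j} ∑_{i∈S_j} p_i(τ, t_{−j}) dτ of Proposition 1. -/
def xstar {n m : ℕ} (θ : ℝ) (a : Fin n → ℝ) (S : Fin n → Finset (Fin m))
    (p : (Fin n → ℝ) → Fin m → ℝ) (t : Fin n → ℝ) (j : Fin n) : ℝ :=
  θ * t j * (∑ i ∈ S j, p t i)
    - θ * ∫ τ in (a j)..(t j), ∑ i ∈ S j, p (Function.update t j τ) i

/-!
Substituting `x*` into `ṽ_j` cancels the term `θ t p̃_j(t)`, and Fubini, which applies because the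
allocation is bounded and the density integrable, turns the rest into `θ ∫_{a_j}^t p̃_j`. At
`t = a_j` that integral is empty, so `ṽ_j(a_j) = 0` under `x*`, whereas (iii) makes the objective
`-∑_j ṽ_j(a_j)` of every other payment rule nonpositive.
-/

lemma norm_sum_le_one_of_nonneg_of_sum_univ_le_one {ι : Type*} [Fintype ι] {r : ι → ℝ}
    (hr : ∀ i, 0 ≤ r i) (hsum : ∑ i, r i ≤ 1) (A : Finset ι) : ‖∑ i ∈ A, r i‖ ≤ 1 := by
  rw [Real.norm_of_nonneg (sum_nonneg fun i _ => hr i)]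
  exact (sum_le_univ_sum_of_nonneg hr).trans hsum

section UpdateCoordinate

variable {ι : Type*} [DecidableEq ι] {X : ι → Type*} [∀ i, MeasurableSpace (X i)]
  {ν : Measure (∀ i, X i)} {q w : (∀ i, X i) → ℝ} {j : ι} {C : ℝ}

lemma integrable_comp_update_mul (hq : Measurable q) (hw : Integrable w ν) {τ : X j}
    (hC : ∀ᵐ s ∂ν, ‖q (Function.update s j τ)‖ ≤ C) :
    Integrable (fun s => q (Function.update s j τ) * w s) ν :=
  hw.bdd_mul (hq.comp measurable_update_left).aestronglyMeasurable hC

lemma integrable_prod_comp_update_mul [SFinite ν] {μ : Measure (X j)} [IsFiniteMeasure μ]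
    (hq : Measurable q) (hw : Integrable w ν)
    (hC : ∀ᵐ τ ∂μ, ∀ᵐ s ∂ν, ‖q (Function.update s j τ)‖ ≤ C) :
    Integrable (Function.uncurry fun τ s => q (Function.update s j τ) * w s) (μ.prod ν) := by
  have hq_update : Measurable fun z : X j × (∀ i, X i) => q (Function.update z.2 j z.1) :=
    hq.comp (measurable_update'.comp measurable_swap)
  have hC_prod : ∀ᵐ z ∂μ.prod ν, ‖q (Function.update z.2 j z.1)‖ ≤ C :=
    (Measure.ae_prod_iff_ae_ae (measurableSet_le hq_update.norm measurable_const)).2 hC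
  exact (hw.comp_snd μ).bdd_mul hq_update.aestronglyMeasurable hC_prod

end UpdateCoordinate

section TypeSpace

variable {n : ℕ} {a abar : Fin n → ℝ}

lemma measurableSet_Tspace : MeasurableSet (Tspace a abar) :=
  MeasurableSet.univ_pi fun _ => measurableSet_Icc

lemma integrableOn_jointDens {f : Fin n → ℝ → ℝ}
    (hf : ∀ j, IntegrableOn (f j) (Set.Icc (a j) (abar j))) :
    IntegrableOn (jointDens f) (Tspace a abar) := by
  rw [IntegrableOn, Tspace, volume_pi, Measure.restrict_pi_pi]
  exact Integrable.fintype_prod hf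

lemma ae_restrict_Tspace_update {P : (Fin n → ℝ) → Prop} (hP : ∀ t ∈ Tspace a abar, P t)
    {j : Fin n} {τ : ℝ} (hτ : τ ∈ Set.Icc (a j) (abar j)) :
    ∀ᵐ s ∂volume.restrict (Tspace a abar), P (Function.update s j τ) := by
  filter_upwards [ae_restrict_mem measurableSet_Tspace] with s hs
  exact hP _ ((Set.update_mem_pi_iff_of_mem hs).2 fun _ => hτ)

end TypeSpace

section Payment

variable {n m : ℕ} (θ : ℝ) {a abar : Fin n → ℝ} {f : Fin n → ℝ → ℝ}
  {S : Fin n → Finset (Fin m)} {p : (Fin n → ℝ) → Fin m → ℝ} {j : Fin n}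

lemma xstar_update (t : Fin n → ℝ) (τ : ℝ) :
    xstar θ a S p (Function.update t j τ) j
      = θ * τ * (∑ i ∈ S j, p (Function.update t j τ) i)
        - θ * ∫ σ in (a j)..τ, ∑ i ∈ S j, p (Function.update t j σ) i := by
  simp only [xstar, Function.update_self, Function.update_idem]

lemma interimPay_xstar (hf : ∀ k, IntegrableOn (f k) (Set.Icc (a k) (abar k)))
    (hp : Measurable p) {C : ℝ} (hC : ∀ t ∈ Tspace a abar, ‖∑ i ∈ S j, p t i‖ ≤ C)
    {t : ℝ} (ht : t ∈ Set.Icc (a j) (abar j)) :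
    interimPay a abar f (xstar θ a S p) j t
      = θ * t * interimAlloc a abar f S p j t
        - θ * ∫ τ in (a j)..t, interimAlloc a abar f S p j τ := by
  have hq : Measurable fun s => ∑ i ∈ S j, p s i := by fun_prop
  have hdens := integrableOn_jointDens hf
  have hbound : ∀ τ ∈ Set.Icc (a j) (abar j), ∀ᵐ s ∂volume.restrict (Tspace a abar),
      ‖∑ i ∈ S j, p (Function.update s j τ) i‖ ≤ C :=
    fun _ hτ => ae_restrict_Tspace_update hC hτ
  have hsubset : Set.uIoc (a j) t ⊆ Set.Icc (a j) (abar j) :=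
    Set.uIoc_subset_uIcc.trans (Set.uIcc_subset_Icc ⟨le_rfl, ht.1.trans ht.2⟩ ht)
  have hslice := integrable_comp_update_mul hq hdens (hbound t ht)
  have : IsFiniteMeasure (volume.restrict (Set.uIoc (a j) t)) :=
    isFiniteMeasure_restrict.2 measure_Ioc_lt_top.ne
  have hprod := integrable_prod_comp_update_mul (μ := volume.restrict (Set.uIoc (a j) t)) hq hdens
    ((ae_restrict_mem measurableSet_uIoc).mono fun τ hτ => hbound τ (hsubset hτ))
  have hrent : IntegrableOn (fun s => ∫ τ in (a j)..t,
      (∑ i ∈ S j, p (Function.update s j τ) i) * jointDens f s) (Tspace a abar) := by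
    simp only [intervalIntegral.integral_of_le ht.1, ← Set.uIoc_of_le ht.1]
    exact hprod.integral_prod_right
  simp only [interimPay, interimAlloc]
  rw [intervalIntegral_integral_swap hprod, ← integral_const_mul, ← integral_const_mul,
    ← integral_sub (hslice.const_mul _) (hrent.const_mul _)]
  congr with s
  rw [xstar_update, intervalIntegral.integral_mul_const]
  ring

lemma vtld_xstar (hf : ∀ k, IntegrableOn (f k) (Set.Icc (a k) (abar k)))
    (hp : Measurable p) {C : ℝ} (hC : ∀ t ∈ Tspace a abar, ‖∑ i ∈ S j, p t i‖ ≤ C)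
    {t : ℝ} (ht : t ∈ Set.Icc (a j) (abar j)) :
    vtld θ a abar f S p (xstar θ a S p) j t
      = θ * ∫ τ in (a j)..t, interimAlloc a abar f S p j τ := by
  rw [vtld, interimPay_xstar θ hf hp hC ht, sub_sub_cancel]

lemma vtld_xstar_left : vtld θ a abar f S p (xstar θ a S p) j (a j) = 0 := by
  simp only [vtld, interimPay, interimAlloc, xstar_update, intervalIntegral.integral_same,
    mul_zero, sub_zero, mul_assoc, integral_const_mul, sub_self]

end Payment

theorem stmt_8_general {n m : ℕ} (θ : ℝ) (a abar : Fin n → ℝ) (f : Fin n → ℝ → ℝ)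
    (hfprob : ∀ j, ∫ t in Set.Icc (a j) (abar j), f j t = 1)
    (S : Fin n → Finset (Fin m)) (p : (Fin n → ℝ) → Fin m → ℝ) (hp : Measurable p)
    (hbdd : ∀ j, ∃ C, ∀ t ∈ Tspace a abar, ‖∑ i ∈ S j, p t i‖ ≤ C) :
    (∀ j, vtld θ a abar f S p (xstar θ a S p) j (a j) = 0) ∧
    (∀ j, ∀ t ∈ Set.Icc (a j) (abar j),
        vtld θ a abar f S p (xstar θ a S p) j t
          = vtld θ a abar f S p (xstar θ a S p) j (a j)
            + θ * ∫ τ in (a j)..t, interimAlloc a abar f S p j τ) ∧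
    (∀ x : (Fin n → ℝ) → Fin n → ℝ, (∀ j, 0 ≤ vtld θ a abar f S p x j (a j)) →
      -(∑ j, vtld θ a abar f S p x j (a j))
        ≤ -(∑ j, vtld θ a abar f S p (xstar θ a S p) j (a j))) ∧
    -(∑ j, vtld θ a abar f S p (xstar θ a S p) j (a j)) = 0 := by
  have hvalue : -(∑ j, vtld θ a abar f S p (xstar θ a S p) j (a j)) = 0 := by
    simp only [vtld_xstar_left, sum_const_zero, neg_zero]
  refine ⟨fun j => vtld_xstar_left θ, fun j t ht => ?_, fun x hx => ?_, hvalue⟩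
  · obtain ⟨C, hC⟩ := hbdd j
    rw [vtld_xstar_left, zero_add]
    exact vtld_xstar θ (fun k => integrable_of_integral_eq_one (hfprob k)) hp hC ht
  · rw [hvalue]
    exact neg_nonpos.2 (sum_nonneg fun j _ => hx j)

/-- Proposition 1: for a fixed feasible allocation p with monotone interim
allocations, the payment rule x* satisfies conditions (ii) and (iii) of
Lemma 1 with ṽ_j(a_j) = 0, and it maximizes −∑_j ṽ_j(a_j) over all integrable
payment rules satisfying (ii) and (iii), achieving the optimal value 0. -/
theorem stmt_8 {n m : ℕ} (θ : ℝ) (hθ : 0 < θ)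
    (a abar : Fin n → ℝ) (hab : ∀ j, a j < abar j)
    (f : Fin n → ℝ → ℝ)
    (hfmeas : ∀ j, Measurable (f j))
    (hfpos : ∀ j, ∀ t ∈ Set.Icc (a j) (abar j), 0 < f j t)
    (hfprob : ∀ j, ∫ t in Set.Icc (a j) (abar j), f j t = 1)
    (S : Fin n → Finset (Fin m))
    (p : (Fin n → ℝ) → Fin m → ℝ) (hpmeas : Measurable p)
    (hFF : ∀ t ∈ Tspace a abar, (∀ i, 0 ≤ p t i) ∧ ∑ i, p t i ≤ 1)
    (hmono : ∀ j, MonotoneOn (interimAlloc a abar f S p j) (Set.Icc (a j) (abar j))) :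
    -- x* satisfies (iii) with equality: ṽ*_j(a_j) = 0 for every j
    (∀ j, vtld θ a abar f S p (xstar θ a S p) j (a j) = 0) ∧
    -- x* satisfies the envelope condition (ii)
    (∀ j, ∀ t ∈ Set.Icc (a j) (abar j),
        vtld θ a abar f S p (xstar θ a S p) j t
          = vtld θ a abar f S p (xstar θ a S p) j (a j)
            + θ * ∫ τ in (a j)..t, interimAlloc a abar f S p j τ) ∧
    -- x* maximizes −∑_j ṽ_j(a_j) over payment rules satisfying (ii) and (iii) …
    (∀ x : (Fin n → ℝ) → Fin n → ℝ, Measurable x →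
      (∀ j, IntegrableOn (fun t => x t j * jointDens f t) (Tspace a abar)) →
      (∀ j, ∀ t ∈ Set.Icc (a j) (abar j),
          vtld θ a abar f S p x j t
            = vtld θ a abar f S p x j (a j)
              + θ * ∫ τ in (a j)..t, interimAlloc a abar f S p j τ) →
      (∀ j, 0 ≤ vtld θ a abar f S p x j (a j)) →
      -(∑ j, vtld θ a abar f S p x j (a j))
        ≤ -(∑ j, vtld θ a abar f S p (xstar θ a S p) j (a j))) ∧
    -- … achieving the optimal value 0
    -(∑ j, vtld θ a abar f S p (xstar θ a S p) j (a j)) = 0 := by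
  obtain ⟨hleft, henvelope, hmax, hvalue⟩ := stmt_8_general θ a abar f hfprob S p hpmeas
    fun j => ⟨1, fun t ht =>
      norm_sum_le_one_of_nonneg_of_sum_univ_le_one (hFF t ht).1 (hFF t ht).2 (S j)⟩
  exact ⟨hleft, henvelope, fun x _ _ _ hx => hmax x hx, hvalue⟩

end Caching
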